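/- Let k be a commutative ring, H a Hopf algebra over k that is finitely generated, faithful and projective as a k-module, and A a right H-comodule algebra with coaction ρ(a) = Σ a_0 ⊗ a_1. Then the following are equivalent: (1) the map can' : A ⊗_k A → A ⊗_k H, can'(a' ⊗ a) = Σ a'a_0 ⊗ a_1, is bijective and A is faithfully flat as a k-module; (2) the k-linear map Φ : Hom_k(H, k) ⊗_k A → End_k(A), Φ(h* ⊗ a)(b) = Σ h*(b_1)·b_0·a, is bijective and A is finitely generated, faithful and projective as a k-module. -/

import Mathlib

open TensorProduct CoalgebraStruct

universe u

section Hopf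

variable (k A H : Type u) [CommRing k] [Ring A] [Algebra k A]
  [Ring H] [HopfAlgebra k H]

/-- `ρ : A → A ⊗ H` makes the `k`-algebra `A` a right `H`-comodule algebra. -/
noncomputable def IsComoduleAlgebra (ρ : A →ₐ[k] A ⊗[k] H) : Prop :=
  (∀ a : A, TensorProduct.assoc k A H H (LinearMap.rTensor H ρ.toLinearMap (ρ a)) =
      LinearMap.lTensor A (comul (R := k)) (ρ a)) ∧
  (∀ a : A, TensorProduct.rid k A (LinearMap.lTensor A (counit (R := k)) (ρ a)) = a)

/-- The canonical map `can' : A ⊗ A → A ⊗ H`, `a' ⊗ a ↦ Σ a' a_0 ⊗ a_1`. -/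
noncomputable def canHopf (ρ : A →ₐ[k] A ⊗[k] H) : A ⊗[k] A →ₗ[k] A ⊗[k] H :=
  LinearMap.rTensor H (LinearMap.mul' k A) ∘ₗ
    (TensorProduct.assoc k A A H).symm.toLinearMap ∘ₗ
    LinearMap.lTensor A ρ.toLinearMap

/-- For `h* : H → k` and `a : A`, the endomorphism `b ↦ Σ h*(b_1) b_0 a` of `A`. -/
noncomputable def phiAux (ρ : A →ₐ[k] A ⊗[k] H) (h' : Module.Dual k H) (a : A) :
    A →ₗ[k] A :=
  LinearMap.mulRight k a ∘ₗ (TensorProduct.rid k A).toLinearMap ∘ₗ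
    LinearMap.lTensor A h' ∘ₗ ρ.toLinearMap

/-- The map `Φ : Hom_k(H, k) ⊗ A → End_k(A)`, `Φ(h* ⊗ a)(b) = Σ h*(b_1) b_0 a`. -/
noncomputable def phiMap (ρ : A →ₐ[k] A ⊗[k] H) :
    Module.Dual k H ⊗[k] A →ₗ[k] (A →ₗ[k] A) :=
  TensorProduct.lift (LinearMap.mk₂ k (phiAux k A H ρ)
    (fun h₁ h₂ a => by
      ext b
      simp [phiAux, LinearMap.lTensor_add, mul_add, add_mul])
    (fun r h a => by
      ext b
      simp [phiAux, LinearMap.lTensor_smul, smul_mul_assoc])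
    (fun h a₁ a₂ => by
      ext b
      simp [phiAux, mul_add])
    (fun r h a => by
      ext b
      simp [phiAux, mul_smul_comm]))

theorem bijective_of_dual_bijective {R P Q : Type*} [Ring R] [AddCommGroup P] [Module R P]
    [AddCommGroup Q] [Module R Q] [Module.Finite R P] [Module.Projective R P]
    [Module.Finite R Q] [Module.Projective R Q] (f : P →ₗ[R] Q)
    (h : Function.Bijective (fun u : Q →ₗ[R] R => u ∘ₗ f)) : Function.Bijective f := by
  obtain ⟨n, p, i, -, -, hpi⟩ := Module.Finite.exists_comp_eq_id_of_projective R P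
  obtain ⟨m, q, j, -, hj, hqj⟩ := Module.Finite.exists_comp_eq_id_of_projective R Q
  choose u hu using fun l : Fin n => h.2 (LinearMap.proj l ∘ₗ i)
  have hg : (p ∘ₗ LinearMap.pi u) ∘ₗ f = LinearMap.id := by
    have : LinearMap.pi u ∘ₗ f = i := by
      ext x l
      exact congrArg (fun t => t x) (hu l)
    rw [LinearMap.comp_assoc, this, hpi]
  set g := p ∘ₗ LinearMap.pi u with hgdef
  have hfg : f ∘ₗ g = LinearMap.id := by
    ext y
    apply hj
    ext l
    have : (LinearMap.proj l ∘ₗ j) ∘ₗ (f ∘ₗ g) = LinearMap.proj l ∘ₗ j := by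
      apply h.1
      change ((LinearMap.proj l ∘ₗ j) ∘ₗ (f ∘ₗ g)) ∘ₗ f = (LinearMap.proj l ∘ₗ j) ∘ₗ f
      rw [LinearMap.comp_assoc, LinearMap.comp_assoc f g f, hg, LinearMap.comp_id]
    exact congrArg (fun t => t y) this
  exact ⟨fun x y hxy => by
      have := congrArg g hxy
      rwa [← LinearMap.comp_apply, ← LinearMap.comp_apply, hg] at this,
    fun y => ⟨g y, congrArg (fun t => t y) hfg⟩⟩

theorem finite_descent (R B M : Type u) [CommRing R] [Ring B] [Algebra R B] [AddCommGroup M]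
    [Module R M] [Module.FaithfullyFlat R B] [Module.Finite B (B ⊗[R] M)] :
    Module.Finite R M := by
  have h1 : (Submodule.span B (TensorProduct.mk R B M 1 '' Set.univ)).FG := by
    rw [← Submodule.baseChange_span, Submodule.span_univ, Submodule.baseChange_top]
    exact Module.Finite.fg_top
  rw [Submodule.fg_span_iff_fg_span_finset_subset] at h1
  classical
  obtain ⟨s, hs, hs'⟩ := h1
  obtain ⟨t, -, rfl⟩ := Finset.subset_set_image_iff.1 hs
  refine ⟨⟨t, ?_⟩⟩
  have htop : (Submodule.span R (t : Set M)).baseChange B = ⊤ := by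
    rw [Submodule.baseChange_span, ← Finset.coe_image, ← hs', ← Submodule.baseChange_span,
      Submodule.span_univ, Submodule.baseChange_top]
  have hsurj : Function.Surjective ((Submodule.span R (t : Set M)).subtype.lTensor B) :=
    (LinearMap.range_eq_top (f := (Submodule.span R (t : Set M)).subtype.baseChange B)).1 htop
  rw [Module.FaithfullyFlat.lTensor_surjective_iff_surjective] at hsurj
  rw [← Submodule.range_subtype (Submodule.span R (t : Set M))]
  exact LinearMap.range_eq_top.2 hsurj

theorem finite_projective_descent (R B M : Type u) [CommRing R] [Ring B] [Algebra R B]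
    [AddCommGroup M] [Module R M] [Module.FaithfullyFlat R B] [Module.Flat R M]
    [Module.Finite B (B ⊗[R] M)] [Module.Projective B (B ⊗[R] M)] :
    Module.Finite R M ∧ Module.Projective R M := by
  have hfin : Module.Finite R M := finite_descent R B M
  refine ⟨hfin, ?_⟩
  obtain ⟨n, f, hf⟩ := Module.Finite.exists_fin' R M
  have hfp : Module.FinitePresentation B (B ⊗[R] M) :=
    Module.finitePresentation_of_projective _ _
  have hsurj : Function.Surjective (f.baseChange B) := LinearMap.lTensor_surjective B hf
  have hker := Module.FinitePresentation.fg_ker (f.baseChange B) hsurj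
  have hinj : Function.Injective ((LinearMap.ker f).subtype.baseChange B) :=
    Module.Flat.lTensor_preserves_injective_linearMap (M := B) _ (LinearMap.ker f).injective_subtype
  have hex : LinearMap.range ((LinearMap.ker f).subtype.baseChange B)
      = LinearMap.ker (f.baseChange B) := by
    ext x
    have := lTensor_exact B (LinearMap.exact_subtype_ker_map f) hf
    exact (this x).symm
  have : Module.Finite B (LinearMap.range ((LinearMap.ker f).subtype.baseChange B)) := by
    rw [hex]; exact Module.Finite.of_fg hker
  have : Module.Finite B (B ⊗[R] LinearMap.ker f) :=
    Module.Finite.equiv (LinearEquiv.ofInjective _ hinj).symm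
  have : Module.Finite R (LinearMap.ker f) := finite_descent R B _
  have : Module.FinitePresentation R M :=
    Module.finitePresentation_of_surjective f hf (Module.Finite.iff_fg.1 this)
  exact Module.Flat.projective_of_finitePresentation

theorem faithfullyFlat_of_progenerator (R M : Type*) [CommRing R] [AddCommGroup M] [Module R M]
    [Module.Finite R M] [Module.Projective R M] [FaithfulSMul R M] :
    Module.FaithfullyFlat R M where
  submodule_ne_top m hm h := by
    obtain ⟨r, hr, hr'⟩ := Submodule.exists_sub_one_mem_and_smul_eq_zero_of_fg_of_le_smul m
      (⊤ : Submodule R M) Module.Finite.fg_top h.ge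
    have : r = 0 := FaithfulSMul.eq_of_smul_eq_smul (α := M) fun a => by
      rw [hr' a trivial, zero_smul]
    subst this
    rw [zero_sub, neg_mem_iff] at hr
    exact hm.ne_top ((Ideal.eq_top_iff_one m).2 hr)

theorem faithful_of_faithfullyFlat (R M : Type u) [CommRing R] [AddCommGroup M] [Module R M]
    [Module.FaithfullyFlat R M] : FaithfulSMul R M := by
  refine ⟨fun {r₁ r₂} h => ?_⟩
  have hz : LinearMap.lTensor M (LinearMap.lsmul R R (r₁ - r₂)) = 0 := by
    ext m
    simp only [AlgebraTensorModule.curry_apply, LinearMap.restrictScalars_self, curry_apply,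
      LinearMap.lTensor_tmul, LinearMap.lsmul_apply, LinearMap.zero_apply]
    rw [tmul_smul, smul_tmul', sub_smul, h m, sub_self, zero_tmul]
  have hex : Function.Exact (LinearMap.lTensor M (LinearMap.id : R →ₗ[R] R))
      (LinearMap.lTensor M (LinearMap.lsmul R R (r₁ - r₂))) := by
    rw [hz]
    intro x
    simp
  rw [Module.FaithfullyFlat.lTensor_exact_iff_exact] at hex
  have := (hex 1).2 ⟨1, rfl⟩
  simpa [sub_eq_zero] using this

/-- Left `B`-linear maps `B ⊗ M → B` are the same as `R`-linear maps `M → B`. -/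
noncomputable def evOne (R B M : Type u) [CommRing R] [Ring B] [Algebra R B] [AddCommGroup M]
    [Module R M] : (B ⊗[R] M →ₗ[B] B) ≃ (M →ₗ[R] B) where
  toFun F := F.restrictScalars R ∘ₗ TensorProduct.mk R B M 1
  invFun g :=
    { toFun := LinearMap.mul' R B ∘ₗ LinearMap.lTensor B g
      map_add' := by simp
      map_smul' := fun b z => by
        induction z with
        | zero => simp
        | tmul x y => simp [smul_tmul', mul_assoc]
        | add x y hx hy => simp only [smul_add, map_add, hx, hy] }
  left_inv F := by
    ext m
    simp
  right_inv g := by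
    ext m
    simp

theorem canHopf_tmul (ρ : A →ₐ[k] A ⊗[k] H) (x y : A) :
    canHopf k A H ρ (x ⊗ₜ y) = x • ρ y := by
  simp only [canHopf, LinearMap.comp_apply, LinearMap.lTensor_tmul, AlgHom.toLinearMap_apply]
  induction ρ y with
  | zero => simp
  | tmul a h => simp [smul_tmul']
  | add a b ha hb => simp only [tmul_add, map_add, ha, hb, smul_add]

/-- The canonical map as a left `A`-linear map. -/
noncomputable def canA (ρ : A →ₐ[k] A ⊗[k] H) : A ⊗[k] A →ₗ[A] A ⊗[k] H where
  toFun := canHopf k A H ρ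
  map_add' := map_add _
  map_smul' b z := by
    induction z with
    | zero => simp
    | tmul x y => simp [smul_tmul', canHopf_tmul, mul_smul]
    | add x y hx hy => simp only [smul_add, map_add, hx, hy]

theorem phiMap_eq (ρ : A →ₐ[k] A ⊗[k] H) (z : Module.Dual k H ⊗[k] A) :
    phiMap k A H ρ z =
      evOne k A A ((evOne k A H).symm (dualTensorHom k H A z) ∘ₗ canA k A H ρ) := by
  ext b
  have h1 : evOne k A A ((evOne k A H).symm (dualTensorHom k H A z) ∘ₗ canA k A H ρ) b =
      LinearMap.mul' k A (LinearMap.lTensor A (dualTensorHom k H A z) (ρ b)) := by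
    change LinearMap.mul' k A (LinearMap.lTensor A (dualTensorHom k H A z)
      (canHopf k A H ρ (1 ⊗ₜ b))) = _
    rw [canHopf_tmul, one_smul]
  rw [h1]
  clear h1
  induction z with
  | zero => simp
  | add x y hx hy => simp only [map_add, LinearMap.add_apply, hx, hy, LinearMap.lTensor_add]
  | tmul f a =>
    simp only [phiMap, TensorProduct.lift.tmul, LinearMap.mk₂_apply, phiAux, LinearMap.comp_apply,
      AlgHom.toLinearMap_apply]
    induction ρ b with
    | zero => simp
    | add x y hx hy => simp only [map_add, hx, hy]
    | tmul x y => simp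

theorem phi_bijective_iff [Module.Finite k H] [Module.Projective k H] (ρ : A →ₐ[k] A ⊗[k] H) :
    Function.Bijective (phiMap k A H ρ) ↔
      Function.Bijective (fun u : A ⊗[k] H →ₗ[A] A => u ∘ₗ canA k A H ρ) := by
  have : (phiMap k A H ρ : Module.Dual k H ⊗[k] A → (A →ₗ[k] A)) =
      evOne k A A ∘ (fun u : A ⊗[k] H →ₗ[A] A => u ∘ₗ canA k A H ρ) ∘ (evOne k A H).symm ∘
        dualTensorHom k H A := funext (phiMap_eq k A H ρ)
  rw [this, (evOne k A A).comp_bijective]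
  have h := (evOne k A H).symm.bijective.comp
    (dualTensorHom_bijective (R := k) (M := H) (N := A))
  exact Function.Bijective.of_comp_iff _ h

/-- For a `k`-progenerator Hopf algebra `H` and a right `H`-comodule algebra `A`:
`can'` is bijective and `A` is faithfully flat over `k` iff
`Φ : Hom_k(H,k) ⊗ A → End_k(A)` is bijective and `A` is a `k`-progenerator. -/
theorem hopfGalois_iff_phi_bijective
    [Module.Finite k H] [Module.Projective k H] [FaithfulSMul k H]
    (ρ : A →ₐ[k] A ⊗[k] H) (hρ : IsComoduleAlgebra k A H ρ) :
    (Function.Bijective (canHopf k A H ρ) ∧ Module.FaithfullyFlat k A) ↔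
    (Function.Bijective (phiMap k A H ρ) ∧
      Module.Finite k A ∧ Module.Projective k A ∧ FaithfulSMul k A) := by
  have hcan : ⇑(canHopf k A H ρ) = ⇑(canA k A H ρ) := rfl
  rw [phi_bijective_iff, hcan]
  constructor
  · rintro ⟨h1, h2⟩
    let e := LinearEquiv.ofBijective (canA k A H ρ) h1
    have : Module.Finite A (A ⊗[k] A) := Module.Finite.equiv e.symm
    have : Module.Projective A (A ⊗[k] A) := Module.Projective.of_equiv e.symm
    obtain ⟨h3, h4⟩ := finite_projective_descent k A A
    refine ⟨?_, h3, h4, faithful_of_faithfullyFlat k A⟩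
    constructor
    · intro u v huv
      refine LinearMap.ext fun y => ?_
      obtain ⟨x, rfl⟩ := h1.2 y
      exact congrArg (fun t => t x) huv
    · intro w
      refine ⟨w ∘ₗ e.symm.toLinearMap, ?_⟩
      refine LinearMap.ext fun x => ?_
      exact congrArg w (e.symm_apply_apply x)
  · rintro ⟨h1, h2, h3, h4⟩
    exact ⟨bijective_of_dual_bijective _ h1, faithfullyFlat_of_progenerator k A⟩

end Hopf
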